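/- For every R > 0 there is a constant C(R), depending only on R, such that for every probability density G on ℝ³ × ℝ³ with finite Fisher information I(G) := ∫_{ℝ⁶} |∇G|²/G < ∞, one has ∫_{B_R × B_R} G(v,w)/|v−w|^{3/2} dv dw ≤ C(R)·(1 + I(G)), where B_R ⊂ ℝ³ is the closed ball of radius R centered at the origin. -/

import Mathlib

open MeasureTheory Real

noncomputable section

abbrev V3 := Fin 3 → ℝ

/-- Squared Euclidean norm on ℝ³. -/
def sq3 (z : V3) : ℝ := ∑ α, (z α) ^ 2
/-- Euclidean norm on ℝ³. -/
def nrm3 (z : V3) : ℝ := Real.sqrt (sq3 z)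

/-- Partial derivative in the `α`-th coordinate of the first variable `v`. -/
def pdv (G : V3 × V3 → ℝ) (z : V3 × V3) (α : Fin 3) : ℝ :=
  fderiv ℝ G z (Pi.single α 1, 0)

/-- Partial derivative in the `α`-th coordinate of the second variable `w`. -/
def pdw (G : V3 × V3 → ℝ) (z : V3 × V3) (α : Fin 3) : ℝ :=
  fderiv ℝ G z (0, Pi.single α 1)

/-- Fisher information of a density on ℝ³ × ℝ³. -/
def fisher2 (G : V3 × V3 → ℝ) : ℝ :=
  ∫ z : V3 × V3, (∑ α, ((pdv G z α) ^ 2 + (pdw G z α) ^ 2)) / G z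

/-!
The field `(n - 2) x / |x|²` on `ℝⁿ` has divergence equal to its squared length. Integrating `G` by
parts against it in the variable `x = v - w`, with `w` fixed, and completing the square in
`|∇G + G F|² / G ≥ 0` gives Hardy's inequality `(n - 2)² ∫ G / |x|² ≤ ∫ |∇G|² / G`; the singularity
is removed by replacing `|x|²` with `|x|² + ε` and letting `ε → 0`. For `n = 3` the constant is `1`,
and since `|x|^(-3/2) ≤ 1 + |x|^(-2)`, the theorem holds with `C = 1` for every `R`. This replaces
the Sobolev embedding of the paper.
-/

open Filter Topology
open scoped RealInnerProductSpace

/-- The Fisher information density `(∂_v G)² / G` of `G` in the direction `v`. Since `x / 0 = 0`, it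
vanishes at the zeros of `G`; a nonnegative differentiable `G` has `∂_v G = 0` there. -/
def fisherDensity {V : Type*} [NormedAddCommGroup V] [NormedSpace ℝ V] (G : V → ℝ) (v z : V) : ℝ :=
  fderiv ℝ G z v ^ 2 / G z

section FisherDensity

variable {V : Type*} [NormedAddCommGroup V] [NormedSpace ℝ V] {G : V → ℝ}

lemma fisherDensity_nonneg (h0 : ∀ z, 0 ≤ G z) (v z : V) : 0 ≤ fisherDensity G v z :=
  div_nonneg (sq_nonneg _) (h0 z)

lemma fderiv_eq_zero_of_nonneg_of_eq_zero (h0 : ∀ z, 0 ≤ G z) {z : V} (hz : G z = 0) :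
    fderiv ℝ G z = 0 :=
  IsLocalMin.fderiv_eq_zero (Eventually.of_forall fun y => hz.trans_le (h0 y))

lemma neg_two_mul_fderiv_mul_le (h0 : ∀ z, 0 ≤ G z) (v z : V) (f : ℝ) :
    -(2 * (fderiv ℝ G z v * f)) ≤ fisherDensity G v z + G z * f ^ 2 := by
  rcases (h0 z).eq_or_lt' with hz | hz
  · simp [fisherDensity, fderiv_eq_zero_of_nonneg_of_eq_zero h0 hz, hz]
  · have hsq : fisherDensity G v z + G z * f ^ 2 + 2 * (fderiv ℝ G z v * f) =
        (fderiv ℝ G z v + G z * f) ^ 2 / G z := by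
      rw [fisherDensity]
      field_simp
      ring
    have : 0 ≤ (fderiv ℝ G z v + G z * f) ^ 2 / G z := by positivity
    linarith

variable [MeasurableSpace V] [BorelSpace V] {μ : Measure V}

lemma integrable_fderiv_apply (h0 : ∀ z, 0 ≤ G z) (hG : Integrable G μ) {v : V}
    (hI : Integrable (fisherDensity G v) μ) : Integrable (fun z => fderiv ℝ G z v) μ := by
  refine (hI.add hG).mono' (measurable_fderiv_apply_const ℝ G v).aestronglyMeasurable
    (ae_of_all _ fun z => ?_)
  have hpos := neg_two_mul_fderiv_mul_le h0 v z 1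
  have hneg := neg_two_mul_fderiv_mul_le h0 v z (-1)
  have := fisherDensity_nonneg h0 v z
  have := h0 z
  rw [norm_eq_abs, abs_le, Pi.add_apply]
  constructor <;> linarith

variable [FiniteDimensional ℝ V] [μ.IsAddHaarMeasure]

lemma integral_mul_two_mul_deriv_sub_sq_le (h0 : ∀ z, 0 ≤ G z) (hG : Integrable G μ)
    (hd : Differentiable ℝ G) {v : V} (hI : Integrable (fisherDensity G v) μ) {F F' : V → ℝ}
    {C C' : ℝ} (hF : AEStronglyMeasurable F μ) (hF' : AEStronglyMeasurable F' μ)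
    (hFC : ∀ z, |F z| ≤ C) (hFC' : ∀ z, |F' z| ≤ C')
    (hderiv : ∀ z, HasLineDerivAt ℝ F (F' z) z v) :
    Integrable (fun z => G z * (2 * F' z - F z ^ 2)) μ ∧
      ∫ z, G z * (2 * F' z - F z ^ 2) ∂μ ≤ ∫ z, fisherDensity G v z ∂μ := by
  have hGF : Integrable (fun z => G z * F z) μ := hG.mul_bdd hF (ae_of_all _ hFC)
  have hGF' : Integrable (fun z => 2 * (G z * F' z)) μ :=
    (hG.mul_bdd hF' (ae_of_all _ hFC')).const_mul 2
  have hGFF : Integrable (fun z => G z * F z ^ 2) μ := by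
    simpa only [sq, mul_assoc] using hGF.mul_bdd hF (ae_of_all _ hFC)
  have hdGF : Integrable (fun z => fderiv ℝ G z v * F z) μ :=
    (integrable_fderiv_apply h0 hG hI).mul_bdd hF (ae_of_all _ hFC)
  have hneg : Integrable (fun z => -(2 * (fderiv ℝ G z v * F z))) μ := (hdGF.const_mul 2).neg
  have hparts : ∫ z, G z * F' z ∂μ = -∫ z, fderiv ℝ G z v * F z ∂μ :=
    integral_bilinear_hasLineDerivAt_right_eq_neg_left_of_integrable
      (B := ContinuousLinearMap.mul ℝ ℝ) hdGF (hG.mul_bdd hF' (ae_of_all _ hFC')) hGF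
      (fun z _ => (hd z).hasFDerivAt.hasLineDerivAt v) fun z _ => hderiv z
  have hexpand : (fun z => G z * (2 * F' z - F z ^ 2)) =
      fun z => 2 * (G z * F' z) - G z * F z ^ 2 := by
    funext z
    ring
  rw [hexpand]
  refine ⟨hGF'.sub hGFF, ?_⟩
  calc ∫ z, (2 * (G z * F' z) - G z * F z ^ 2) ∂μ
      = ∫ z, (-(2 * (fderiv ℝ G z v * F z)) - G z * F z ^ 2) ∂μ := by
        rw [integral_sub hGF' hGFF, integral_sub hneg hGFF, integral_neg, integral_const_mul,
          integral_const_mul, hparts, mul_neg]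
    _ ≤ ∫ z, fisherDensity G v z ∂μ :=
        integral_mono (hneg.sub hGFF) hI fun z =>
          sub_le_iff_le_add.mpr (neg_two_mul_fderiv_mul_le h0 v z (F z))

end FisherDensity

section HardyField

variable {E : Type*} [NormedAddCommGroup E] [InnerProductSpace ℝ E] {ε : ℝ}

/-- The component along `u` of the field `x / (‖x‖² + ε)`, a bounded smooth regularization of
`x / ‖x‖²`. -/
def hardyField (ε : ℝ) (u x : E) : ℝ :=
  ⟪u, x⟫ / (‖x‖ ^ 2 + ε)

/-- The derivative of `hardyField ε u` in the direction `u`. -/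
def hardyFieldDeriv (ε : ℝ) (u x : E) : ℝ :=
  ‖u‖ ^ 2 / (‖x‖ ^ 2 + ε) - 2 * ⟪u, x⟫ ^ 2 / (‖x‖ ^ 2 + ε) ^ 2

lemma continuous_hardyField (hε : 0 < ε) (u : E) : Continuous (hardyField ε u) :=
  Continuous.div (by fun_prop) (by fun_prop) fun x => by positivity

lemma continuous_hardyFieldDeriv (hε : 0 < ε) (u : E) : Continuous (hardyFieldDeriv ε u) :=
  (Continuous.div (by fun_prop) (by fun_prop) fun x => by positivity).sub
    (Continuous.div (by fun_prop) (by fun_prop) fun x => by positivity)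

lemma hasLineDerivAt_hardyField (hε : 0 < ε) (u x : E) :
    HasLineDerivAt ℝ (hardyField ε u) (hardyFieldDeriv ε u x) x u := by
  have hnum : HasFDerivAt (fun y : E => ⟪u, y⟫) (innerSL ℝ u) x := (innerSL ℝ u).hasFDerivAt
  have hden : HasFDerivAt (fun y : E => ‖y‖ ^ 2 + ε) (2 • innerSL ℝ x) x :=
    (hasStrictFDerivAt_norm_sq x).hasFDerivAt.add_const ε
  have hD : ‖x‖ ^ 2 + ε ≠ 0 := by positivity
  have hline := (hnum.hasLineDerivAt u).div (hden.hasLineDerivAt u) (by simpa using hD)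
  refine HasDerivAt.congr_deriv hline ?_
  simp only [zero_smul, add_zero, innerSL_apply_apply, real_inner_self_eq_norm_sq,
    smul_apply, real_inner_comm x u, hardyFieldDeriv]
  field_simp
  ring

lemma abs_hardyField_le (hε : 0 < ε) (u x : E) : |hardyField ε u x| ≤ ‖u‖ * (1 + 1 / ε) := by
  have hx : ‖x‖ ≤ (1 + 1 / ε) * (‖x‖ ^ 2 + ε) := by
    have hexp : (1 + 1 / ε) * (‖x‖ ^ 2 + ε) = ‖x‖ ^ 2 + 1 + (ε + ‖x‖ ^ 2 / ε) := by
      field_simp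
      ring
    have : 0 ≤ ε + ‖x‖ ^ 2 / ε := by positivity
    nlinarith [sq_nonneg (‖x‖ - 1)]
  rw [hardyField, abs_div, abs_of_pos (by positivity : 0 < ‖x‖ ^ 2 + ε),
    div_le_iff₀ (by positivity), mul_assoc]
  exact (abs_real_inner_le_norm u x).trans (by gcongr)

lemma abs_hardyFieldDeriv_le (hε : 0 < ε) (u x : E) :
    |hardyFieldDeriv ε u x| ≤ ‖u‖ ^ 2 / ε := by
  have hinner : ⟪u, x⟫ ^ 2 ≤ ‖u‖ ^ 2 * (‖x‖ ^ 2 + ε) :=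
    calc ⟪u, x⟫ ^ 2 ≤ (‖u‖ * ‖x‖) ^ 2 :=
          sq_le_sq.mpr ((abs_real_inner_le_norm u x).trans (le_abs_self _))
      _ ≤ ‖u‖ ^ 2 * (‖x‖ ^ 2 + ε) := by
        rw [mul_pow]
        gcongr
        linarith
  have hquot : ⟪u, x⟫ ^ 2 / (‖x‖ ^ 2 + ε) ^ 2 ≤ ‖u‖ ^ 2 / (‖x‖ ^ 2 + ε) := by
    rw [div_le_div_iff₀ (by positivity) (by positivity), sq (‖x‖ ^ 2 + ε), ← mul_assoc]
    gcongr
  calc |hardyFieldDeriv ε u x| ≤ ‖u‖ ^ 2 / (‖x‖ ^ 2 + ε) := by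
        have : 0 ≤ ⟪u, x⟫ ^ 2 / (‖x‖ ^ 2 + ε) ^ 2 := by positivity
        rw [hardyFieldDeriv, mul_div_assoc, abs_le]
        constructor <;> linarith
    _ ≤ ‖u‖ ^ 2 / ε := by
        gcongr
        linarith [sq_nonneg ‖x‖]

variable {ι : Type*} [Fintype ι]

/-- For the multiple `c x / ‖x‖ ^ 2` of the unregularized field the sum is
`(2 c (card ι - 2) - c ^ 2) / ‖x‖ ^ 2`, which is largest at `c = card ι - 2`. -/
lemma sq_card_sub_two_div_le_sum_hardyFieldDeriv (b : OrthonormalBasis ι ℝ E)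
    (hι : 2 ≤ Fintype.card ι) (hε : 0 < ε) (x : E) :
    ((Fintype.card ι : ℝ) - 2) ^ 2 / (‖x‖ ^ 2 + ε) ≤
      ∑ i, (2 * (((Fintype.card ι : ℝ) - 2) * hardyFieldDeriv ε (b i) x) -
        (((Fintype.card ι : ℝ) - 2) * hardyField ε (b i) x) ^ 2) := by
  have hn : (2 : ℝ) ≤ Fintype.card ι := mod_cast hι
  generalize hc : (Fintype.card ι : ℝ) - 2 = c
  have hc0 : 0 ≤ c := by linarith
  have hdiv : ∑ i, hardyFieldDeriv ε (b i) x =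
      (c + 2) / (‖x‖ ^ 2 + ε) - 2 * ‖x‖ ^ 2 / (‖x‖ ^ 2 + ε) ^ 2 := by
    simp only [hardyFieldDeriv, b.norm_eq_one, Finset.sum_sub_distrib, Finset.sum_const,
      Finset.card_univ, ← Finset.sum_div, ← Finset.mul_sum, b.sum_sq_inner_right, ← hc]
    simp [div_eq_mul_inv]
  have hsq : ∑ i, hardyField ε (b i) x ^ 2 = ‖x‖ ^ 2 / (‖x‖ ^ 2 + ε) ^ 2 := by
    simp only [hardyField, div_pow, ← Finset.sum_div, b.sum_sq_inner_right]
  have hsum : ∑ i, (2 * (c * hardyFieldDeriv ε (b i) x) - (c * hardyField ε (b i) x) ^ 2) =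
      c ^ 2 / (‖x‖ ^ 2 + ε) + ε * (4 * c + c ^ 2) / (‖x‖ ^ 2 + ε) ^ 2 := by
    simp only [mul_pow, Finset.sum_sub_distrib, ← Finset.mul_sum, hdiv, hsq]
    field_simp
    ring
  rw [hsum]
  exact le_add_of_nonneg_right (by positivity)

end HardyField

lemma integrable_and_integral_le_of_tendsto {α : Type*} [MeasurableSpace α] {μ : Measure α}
    {f : ℕ → α → ℝ} {F : α → ℝ} {C : ℝ} (hf : ∀ n, Integrable (f n) μ) (h0 : ∀ n, 0 ≤ᵐ[μ] f n)
    (hC : ∀ n, ∫ x, f n x ∂μ ≤ C)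
    (hlim : ∀ᵐ x ∂μ, Tendsto (fun n => f n x) atTop (𝓝 (F x))) :
    Integrable F μ ∧ ∫ x, F x ∂μ ≤ C := by
  have hF0 : 0 ≤ᵐ[μ] F := by
    filter_upwards [hlim, ae_all_iff.mpr h0] with x hx hx0 using ge_of_tendsto' hx hx0
  have hFm : AEStronglyMeasurable F μ :=
    aestronglyMeasurable_of_tendsto_ae _ (fun n => (hf n).aestronglyMeasurable) hlim
  have hC0 : 0 ≤ C := (integral_nonneg_of_ae (h0 0)).trans (hC 0)
  have hfatou : ∫⁻ x, ENNReal.ofReal (F x) ∂μ ≤ ENNReal.ofReal C :=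
    calc ∫⁻ x, ENNReal.ofReal (F x) ∂μ
        = ∫⁻ x, liminf (fun n => ENNReal.ofReal (f n x)) atTop ∂μ :=
          lintegral_congr_ae (hlim.mono fun x hx => (ENNReal.tendsto_ofReal hx).liminf_eq.symm)
      _ ≤ liminf (fun n => ∫⁻ x, ENNReal.ofReal (f n x) ∂μ) atTop :=
          lintegral_liminf_le' fun n => (hf n).aemeasurable.ennreal_ofReal
      _ ≤ ENNReal.ofReal C := by
          refine liminf_le_of_le (by isBoundedDefault) fun y hy => ?_
          obtain ⟨n, hn⟩ := hy.exists
          rw [← ofReal_integral_eq_lintegral_ofReal (hf n) (h0 n)] at hn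
          exact hn.trans (ENNReal.ofReal_le_ofReal (hC n))
  refine ⟨⟨hFm, (hasFiniteIntegral_iff_ofReal hF0).mpr
    (hfatou.trans_lt ENNReal.ofReal_lt_top)⟩, ?_⟩
  rw [integral_eq_lintegral_of_nonneg_ae hF0 hFm]
  exact ENNReal.toReal_le_of_le_ofReal hC0 hfatou

lemma inv_rpow_le_one_add_inv_sq {r s : ℝ} (hr : 0 ≤ r) (hs0 : 0 ≤ s) (hs2 : s ≤ 2) :
    (r ^ s)⁻¹ ≤ 1 + (r ^ 2)⁻¹ := by
  rcases hr.eq_or_lt with rfl | hr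
  · rcases hs0.eq_or_lt with rfl | hs0
    · simp
    · simp [zero_rpow hs0.ne']
  rcases le_total 1 r with h1 | h1
  · exact (inv_le_one_of_one_le₀ (one_le_rpow h1 hs0)).trans
      (le_add_of_nonneg_right (by positivity))
  · have hpow : r ^ 2 ≤ r ^ s := by
      simpa only [rpow_two] using rpow_le_rpow_of_exponent_ge hr h1 hs2
    exact (inv_anti₀ (by positivity) hpow).trans (le_add_of_nonneg_left zero_le_one)

section Hardy

variable {V E : Type*} [NormedAddCommGroup V] [NormedSpace ℝ V] [MeasurableSpace V] [BorelSpace V]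
  {μ : Measure V} [NormedAddCommGroup E] [InnerProductSpace ℝ E] {G : V → ℝ} {L : V →L[ℝ] E}

lemma integrable_div_norm_sq_add (hG : Integrable G μ) (L : V →L[ℝ] E) {ε : ℝ} (hε : 0 < ε) :
    Integrable (fun z => G z / (‖L z‖ ^ 2 + ε)) μ := by
  have hcont : Continuous fun z => (‖L z‖ ^ 2 + ε)⁻¹ :=
    Continuous.inv₀ (by fun_prop) fun z => by positivity
  refine hG.mul_bdd (c := ε⁻¹) hcont.aestronglyMeasurable (ae_of_all _ fun z => ?_)
  rw [norm_of_nonneg (by positivity)]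
  gcongr
  linarith [sq_nonneg ‖L z‖]

variable [FiniteDimensional ℝ V] [μ.IsAddHaarMeasure]

lemma ae_apply_ne_zero (hL : L ≠ 0) : ∀ᵐ z ∂μ, L z ≠ 0 := by
  have hker : L.toLinearMap.ker ≠ ⊤ := fun h =>
    hL (ContinuousLinearMap.coe_injective (LinearMap.ker_eq_top.mp h))
  exact ae_iff.mpr <| by simpa using! Measure.addHaar_submodule μ _ hker

variable {ι : Type*} [Fintype ι] {b : OrthonormalBasis ι ℝ E} {e : ι → V}

lemma integral_div_norm_sq_add_le (h0 : ∀ z, 0 ≤ G z) (hG : Integrable G μ)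
    (hd : Differentiable ℝ G) (hL : ∀ i, L (e i) = b i) (hι : 2 ≤ Fintype.card ι)
    (hI : ∀ i, Integrable (fisherDensity G (e i)) μ) {ε : ℝ} (hε : 0 < ε) :
    ((Fintype.card ι : ℝ) - 2) ^ 2 * ∫ z, G z / (‖L z‖ ^ 2 + ε) ∂μ ≤
      ∑ i, ∫ z, fisherDensity G (e i) z ∂μ := by
  set c : ℝ := Fintype.card ι - 2
  have hfield (i : ι) := integral_mul_two_mul_deriv_sub_sq_le h0 hG hd (hI i)
    (F := fun z => c * hardyField ε (b i) (L z)) (F' := fun z => c * hardyFieldDeriv ε (b i) (L z))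
    (C := |c| * (‖b i‖ * (1 + 1 / ε))) (C' := |c| * (‖b i‖ ^ 2 / ε))
    (((continuous_hardyField hε _).comp L.continuous).const_mul c).aestronglyMeasurable
    (((continuous_hardyFieldDeriv hε _).comp L.continuous).const_mul c).aestronglyMeasurable
    (fun z => by rw [abs_mul]; gcongr; exact abs_hardyField_le hε _ _)
    (fun z => by rw [abs_mul]; gcongr; exact abs_hardyFieldDeriv_le hε _ _)
    (fun z => HasDerivAt.const_mul c <| by
      simpa [HasLineDerivAt, hL i] using hasLineDerivAt_hardyField hε (b i) (L z))
  calc c ^ 2 * ∫ z, G z / (‖L z‖ ^ 2 + ε) ∂μ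
      = ∫ z, c ^ 2 * (G z / (‖L z‖ ^ 2 + ε)) ∂μ := (integral_const_mul _ _).symm
    _ ≤ ∫ z, ∑ i, G z * (2 * (c * hardyFieldDeriv ε (b i) (L z)) -
          (c * hardyField ε (b i) (L z)) ^ 2) ∂μ := by
        refine integral_mono ((integrable_div_norm_sq_add hG L hε).const_mul _)
          (integrable_finsetSum _ fun i _ => (hfield i).1) fun z => ?_
        have := mul_le_mul_of_nonneg_left
          (sq_card_sub_two_div_le_sum_hardyFieldDeriv b hι hε (L z)) (h0 z)
        rwa [Finset.mul_sum, mul_div_left_comm] at this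
    _ = ∑ i, ∫ z, G z * (2 * (c * hardyFieldDeriv ε (b i) (L z)) -
          (c * hardyField ε (b i) (L z)) ^ 2) ∂μ :=
        integral_finsetSum _ fun i _ => (hfield i).1
    _ ≤ ∑ i, ∫ z, fisherDensity G (e i) z ∂μ := Finset.sum_le_sum fun i _ => (hfield i).2

/-- For `L = id` this is the sharp Hardy inequality for `√G`, as `|∇G|² / G = 4 |∇√G|²`. -/
theorem hardy_integral_div_norm_sq_le (h0 : ∀ z, 0 ≤ G z) (hG : Integrable G μ)
    (hd : Differentiable ℝ G) (hL : ∀ i, L (e i) = b i) (hι : 2 < Fintype.card ι)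
    (hI : ∀ i, Integrable (fisherDensity G (e i)) μ) :
    Integrable (fun z => G z / ‖L z‖ ^ 2) μ ∧
      ∫ z, G z / ‖L z‖ ^ 2 ∂μ ≤
        (∑ i, ∫ z, fisherDensity G (e i) z ∂μ) / ((Fintype.card ι : ℝ) - 2) ^ 2 := by
  have hn : (2 : ℝ) < Fintype.card ι := mod_cast hι
  have hε (n : ℕ) : (0 : ℝ) < 1 / ((n : ℝ) + 1) := Nat.one_div_pos_of_nat
  have hL0 : L ≠ 0 := by
    rintro rfl
    obtain ⟨i⟩ : Nonempty ι := Fintype.card_pos_iff.mp (by lia)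
    exact b.toBasis.ne_zero i (by simpa using (hL i).symm)
  refine integrable_and_integral_le_of_tendsto
    (fun n => integrable_div_norm_sq_add hG L (hε n))
    (fun n => ae_of_all _ fun z => div_nonneg (h0 z) (add_nonneg (sq_nonneg _) (hε n).le))
    (fun n => ?_) ?_
  · rw [le_div_iff₀' (pow_pos (sub_pos.mpr hn) 2)]
    exact integral_div_norm_sq_add_le h0 hG hd hL hι.le hI (hε n)
  · filter_upwards [ae_apply_ne_zero hL0] with z hz
    have hden : Tendsto (fun n : ℕ => ‖L z‖ ^ 2 + 1 / ((n : ℝ) + 1)) atTop (𝓝 (‖L z‖ ^ 2)) := by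
      simpa using tendsto_one_div_add_atTop_nhds_zero_nat.const_add (‖L z‖ ^ 2)
    exact tendsto_const_nhds.div hden (by simpa using hz)

theorem integral_div_norm_rpow_le (h0 : ∀ z, 0 ≤ G z) (hG : Integrable G μ)
    (hd : Differentiable ℝ G) (hL : ∀ i, L (e i) = b i) (hι : 2 < Fintype.card ι)
    (hI : ∀ i, Integrable (fisherDensity G (e i)) μ) {s : ℝ} (hs0 : 0 ≤ s) (hs2 : s ≤ 2) :
    Integrable (fun z => G z / ‖L z‖ ^ s) μ ∧
      ∫ z, G z / ‖L z‖ ^ s ∂μ ≤ ∫ z, G z ∂μ +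
        (∑ i, ∫ z, fisherDensity G (e i) z ∂μ) / ((Fintype.card ι : ℝ) - 2) ^ 2 := by
  obtain ⟨hint, hle⟩ := hardy_integral_div_norm_sq_le h0 hG hd hL hι hI
  have hpt (z : V) : G z / ‖L z‖ ^ s ≤ G z + G z / ‖L z‖ ^ 2 := by
    simpa only [div_eq_mul_inv, mul_add, mul_one] using
      mul_le_mul_of_nonneg_left (inv_rpow_le_one_add_inv_sq (norm_nonneg (L z)) hs0 hs2) (h0 z)
  have hmeas : Measurable fun z => G z / ‖L z‖ ^ s :=
    hd.continuous.measurable.div (L.continuous.norm.measurable.pow_const s)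
  have hints : Integrable (fun z => G z / ‖L z‖ ^ s) μ := by
    refine (hG.add hint).mono' hmeas.aestronglyMeasurable (ae_of_all _ fun z => ?_)
    rw [norm_of_nonneg (div_nonneg (h0 z) (by positivity))]
    exact hpt z
  refine ⟨hints, ?_⟩
  calc ∫ z, G z / ‖L z‖ ^ s ∂μ ≤ ∫ z, (G z + G z / ‖L z‖ ^ 2) ∂μ :=
        integral_mono hints (hG.add hint) hpt
    _ = ∫ z, G z ∂μ + ∫ z, G z / ‖L z‖ ^ 2 ∂μ := integral_add hG hint
    _ ≤ _ := by gcongr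

end Hardy

section RelativePosition

/-- The relative position `v - w`, as a vector of Euclidean space. -/
def relPos : V3 × V3 →L[ℝ] EuclideanSpace ℝ (Fin 3) :=
  (EuclideanSpace.equiv (Fin 3) ℝ).symm.toContinuousLinearMap ∘L
    (ContinuousLinearMap.fst ℝ V3 V3 - ContinuousLinearMap.snd ℝ V3 V3)

lemma norm_relPos (z : V3 × V3) : ‖relPos z‖ = nrm3 (z.1 - z.2) := by
  simp [relPos, EuclideanSpace.norm_eq, nrm3, sq3]

lemma relPos_single_fst (α : Fin 3) :
    relPos (Pi.single α 1, 0) = EuclideanSpace.basisFun (Fin 3) ℝ α := by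
  simp [relPos]

variable {G : V3 × V3 → ℝ}

lemma sum_sq_pdv_div_le (h0 : ∀ z, 0 ≤ G z) (z : V3 × V3) :
    ∑ α, pdv G z α ^ 2 / G z ≤ (∑ α, (pdv G z α ^ 2 + pdw G z α ^ 2)) / G z := by
  rw [← Finset.sum_div]
  have := h0 z
  gcongr with α
  exact le_add_of_nonneg_right (sq_nonneg _)

lemma integrable_sq_pdv_div (h0 : ∀ z, 0 ≤ G z) (hG : Measurable G)
    (hI : Integrable fun z => (∑ α, (pdv G z α ^ 2 + pdw G z α ^ 2)) / G z) (α : Fin 3) :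
    Integrable fun z => pdv G z α ^ 2 / G z := by
  have hmeas : Measurable fun z => pdv G z α ^ 2 / G z :=
    ((measurable_fderiv_apply_const ℝ G _).pow_const 2).div hG
  refine hI.mono' hmeas.aestronglyMeasurable (ae_of_all _ fun z => ?_)
  have hnonneg (β : Fin 3) : 0 ≤ pdv G z β ^ 2 / G z := div_nonneg (sq_nonneg _) (h0 z)
  rw [norm_of_nonneg (hnonneg α)]
  exact (Finset.single_le_sum (fun β _ => hnonneg β) (Finset.mem_univ α)).trans
    (sum_sq_pdv_div_le h0 z)

lemma sum_integral_sq_pdv_div_le_fisher2 (h0 : ∀ z, 0 ≤ G z) (hG : Measurable G)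
    (hI : Integrable fun z => (∑ α, (pdv G z α ^ 2 + pdw G z α ^ 2)) / G z) :
    ∑ α, ∫ z, pdv G z α ^ 2 / G z ≤ fisher2 G := by
  have hint := integrable_sq_pdv_div h0 hG hI
  rw [← integral_finsetSum _ fun α _ => hint α]
  exact integral_mono (integrable_finsetSum _ fun α _ => hint α) hI (sum_sq_pdv_div_le h0)

end RelativePosition

theorem coulomb_singularity_fisher_bound_strong_general {G : V3 × V3 → ℝ} (h0 : ∀ z, 0 ≤ G z)
    (hG : Integrable G) (hd : Differentiable ℝ G)
    (hI : ∀ α, Integrable fun z => pdv G z α ^ 2 / G z) {s : ℝ} (hs0 : 0 ≤ s) (hs2 : s ≤ 2) :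
    Integrable (fun z : V3 × V3 => G z / nrm3 (z.1 - z.2) ^ s) ∧
      ∫ z : V3 × V3, G z / nrm3 (z.1 - z.2) ^ s ≤
        (∫ z, G z) + ∑ α, ∫ z, pdv G z α ^ 2 / G z := by
  have : (volume : Measure (V3 × V3)).IsAddHaarMeasure := Measure.prod.instIsAddHaarMeasure _ _
  have h := integral_div_norm_rpow_le h0 hG hd relPos_single_fst (by simp) hI hs0 hs2
  have hsq : ((Fintype.card (Fin 3) : ℝ) - 2) ^ 2 = 1 := by norm_num
  simpa only [norm_relPos, hsq, div_one] using! h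

lemma setIntegral_div_nrm3_rpow_le_fisher2 {G : V3 × V3 → ℝ} (h0 : ∀ z, 0 ≤ G z)
    (hG : Integrable G) (hd : Differentiable ℝ G)
    (hI : Integrable fun z => (∑ α, (pdv G z α ^ 2 + pdw G z α ^ 2)) / G z) {s : ℝ} (hs0 : 0 ≤ s)
    (hs2 : s ≤ 2) (S : Set (V3 × V3)) :
    ∫ z in S, G z / nrm3 (z.1 - z.2) ^ s ≤ (∫ z, G z) + fisher2 G := by
  have hGm := hd.continuous.measurable
  obtain ⟨hint, hle⟩ := coulomb_singularity_fisher_bound_strong_general h0 hG hd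
    (integrable_sq_pdv_div h0 hGm hI) hs0 hs2
  calc ∫ z in S, G z / nrm3 (z.1 - z.2) ^ s ≤ ∫ z : V3 × V3, G z / nrm3 (z.1 - z.2) ^ s :=
        setIntegral_le_integral hint (ae_of_all _ fun z =>
          div_nonneg (h0 z) (rpow_nonneg (sqrt_nonneg _) _))
    _ ≤ (∫ z, G z) + ∑ α, ∫ z, pdv G z α ^ 2 / G z := hle
    _ ≤ (∫ z, G z) + fisher2 G := by
        gcongr
        exact sum_integral_sq_pdv_div_le_fisher2 h0 hGm hI

/-- For every `R > 0` there is `C(R)` such that for every probability density `G`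
on ℝ³ × ℝ³ with finite Fisher information,
`∫_{B_R × B_R} G(v,w)/|v−w|^{3/2} ≤ C(R)(1 + I(G))`. -/
theorem coulomb_singularity_fisher_bound_strong :
    ∀ R : ℝ, 0 < R → ∃ C : ℝ, 0 < C ∧
      ∀ G : V3 × V3 → ℝ, Measurable G → (∀ z, 0 ≤ G z) →
        (∫ z : V3 × V3, G z) = 1 → Differentiable ℝ G →
        Integrable (fun z : V3 × V3 => (∑ α, ((pdv G z α) ^ 2 + (pdw G z α) ^ 2)) / G z) →
        (∫ z in {p : V3 × V3 | nrm3 p.1 ≤ R ∧ nrm3 p.2 ≤ R},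
            G z / (nrm3 (z.1 - z.2)) ^ ((3 : ℝ) / 2))
          ≤ C * (1 + fisher2 G) := by
  refine fun R _ => ⟨1, one_pos, fun G _ h0 h1 hd hI => ?_⟩
  have hG : Integrable G := .of_integral_ne_zero (h1.trans_ne one_ne_zero)
  simpa only [h1, one_mul] using
    setIntegral_div_nrm3_rpow_le_fisher2 h0 hG hd hI (by norm_num) (by norm_num) _
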